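/- Let Γ be a strongly regular graph with parameters (v, k, λ, μ), and let r ≥ s be the real roots of x² − (λ−μ)x − (k−μ) (the eigenvalues of Γ other than k), with s < 0. Let C(x, y) = x(x+1)(v−y) − 2xy(k−y+1) + y(y−1)(λ−y+2) be the clique adjacency polynomial of Γ. Then C(⌊−μ/s⌋, ⌊2 − k/s⌋) < 0. -/

import Mathlib

/-- The clique adjacency polynomial over the reals. -/
noncomputable def cliqueAdjPoly (v k lam : ℝ) (x y : ℝ) : ℝ :=
  x * (x + 1) * (v - y) - 2 * x * y * (k - y + 1) + y * (y - 1) * (lam - y + 2)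

open Matrix in
/-- The trace of a real idempotent matrix is a natural number. -/
theorem aux_trace_idem {V : Type*} [Fintype V] [DecidableEq V] (P : Matrix V V ℝ)
    (h : P * P = P) : ∃ n : ℕ, P.trace = n := by
  have h1 : IsIdempotentElem (Matrix.toLin' P) := by
    unfold IsIdempotentElem
    rw [Module.End.mul_eq_comp, ← Matrix.toLin'_mul, h]
  have h2 := (LinearMap.isProj_range_iff_isIdempotentElem _).2 h1
  refine ⟨Module.finrank ℝ (LinearMap.range (Matrix.toLin' P)), ?_⟩
  rw [← Matrix.trace_toLin'_eq]
  exact h2.trace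

theorem aux_idem {V : Type*} [Fintype V] [DecidableEq V] (A J : Matrix V V ℝ)
    (v k l m r s : ℝ) (hv : v ≠ 0) (hw : r - s ≠ 0)
    (hA : A * A = (k - m) • (1 : Matrix V V ℝ) + (l - m) • A + m • J)
    (hAJ : A * J = k • J) (hJA : J * A = k • J) (hJ : J * J = v • J)
    (hl : l - m = r + s) (hk : k - m = - r * s) (hvm : v * m = (k - r) * (k - s)) :
    ((r - s)⁻¹ • (A - s • (1 : Matrix V V ℝ) - ((k - s) / v) • J)) *
      ((r - s)⁻¹ • (A - s • (1 : Matrix V V ℝ) - ((k - s) / v) • J)) =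
    (r - s)⁻¹ • (A - s • (1 : Matrix V V ℝ) - ((k - s) / v) • J) := by
  have key : (A - s • (1 : Matrix V V ℝ) - ((k - s) / v) • J) *
      (A - s • (1 : Matrix V V ℝ) - ((k - s) / v) • J) =
      (r - s) • (A - s • (1 : Matrix V V ℝ) - ((k - s) / v) • J) := by
    simp only [sub_mul, mul_sub, Matrix.smul_mul, Matrix.mul_smul, hA, hAJ, hJA, hJ,
      Matrix.one_mul, Matrix.mul_one, hl, hk]
    have hm : m = (k - r) * (k - s) / v := by field_simp; linarith
    ext i j
    simp only [Matrix.sub_apply, Matrix.add_apply, Matrix.smul_apply, smul_eq_mul]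
    rw [hm]
    field_simp
    ring
  rw [Matrix.smul_mul, Matrix.mul_smul, key, smul_smul, smul_smul]
  congr 1
  field_simp

/-- Multiplicity of an eigenvalue is a natural number. -/
theorem aux_mult {V : Type*} [Fintype V] [DecidableEq V] (G : SimpleGraph V) [DecidableRel G.Adj]
    (v k l m : ℕ) (h : G.IsSRGWith v k l m) (r s : ℝ) (hv : 0 < v) (hw : r - s ≠ 0)
    (hl : (l : ℝ) - m = r + s) (hk : (k : ℝ) - m = - r * s)
    (hvm : (v : ℝ) * m = (k - r) * (k - s)) :
    ∃ n : ℕ, n * (r - s) = - s * (v - 1) - k := by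
  have hv' : (v : ℝ) ≠ 0 := by positivity
  set A := G.adjMatrix ℝ with hAdef
  let J : Matrix V V ℝ := Matrix.of 1
  have hJe : 1 + A + Gᶜ.adjMatrix ℝ = J := by
    rw [← SimpleGraph.compl_adjMatrix_eq_adjMatrix_compl]
    exact G.one_add_adjMatrix_add_compl_adjMatrix_eq_of_one ℝ
  have hA : A * A = ((k : ℝ) - m) • (1 : Matrix V V ℝ) + ((l : ℝ) - m) • A + (m : ℝ) • J := by
    have h2 := h.matrix_eq (α := ℝ)
    rw [← pow_two, h2, ← hJe]
    ext i j
    simp only [Matrix.add_apply, Matrix.smul_apply, smul_eq_mul, hAdef]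
    simp only [nsmul_eq_mul]
    ring
  have hAJ : A * J = (k : ℝ) • J := by
    ext i j
    simp [hAdef, J, SimpleGraph.adjMatrix_mul_apply, h.regular.degree_eq i]
  have hJA : J * A = (k : ℝ) • J := by
    ext i j
    simp [hAdef, J, SimpleGraph.mul_adjMatrix_apply, h.regular.degree_eq j]
  have hJ : J * J = (v : ℝ) • J := by
    ext i j
    simp [J, Matrix.mul_apply, h.card]
  obtain ⟨n, hn⟩ := aux_trace_idem _ (aux_idem A J v k l m r s hv' hw hA hAJ hJA hJ hl hk hvm)
  refine ⟨n, ?_⟩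
  rw [← hn]
  have hJt : J.trace = v := by simp [J, Matrix.trace, h.card]
  have hAt : A.trace = 0 := by simp [hAdef]
  rw [Matrix.trace_smul, Matrix.trace_sub, Matrix.trace_sub, Matrix.trace_smul, Matrix.trace_smul,
    hJt, hAt, Matrix.trace_one, h.card]
  simp only [smul_eq_mul]
  field_simp
  ring

theorem aux_int (q : ℚ) (p c : ℤ) (h : q ^ 2 - p * q - c = 0) : ∃ z : ℤ, q = z := by
  have hm : (Polynomial.X ^ 2 - Polynomial.C p * Polynomial.X - Polynomial.C c :
      Polynomial ℤ).Monic := by monicity!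
  have := isInteger_of_is_root_of_monic (K := ℚ) hm (r := q) (by simpa using h)
  obtain ⟨z, hz⟩ := this
  exact ⟨z, by simpa using hz.symm⟩

/-- The case of integral `r`. -/
theorem aux_poly_int (M a r f : ℝ) (hM : 0 < M) (ha : 0 < a) (hr : 0 ≤ r) (hf : 0 ≤ f)
    (hf1 : f < 1) :
    cliqueAdjPoly (((M + 1) * a + M * r) * (a + r + 1) / a) ((M + 1) * (a + r))
      ((M + 1) * a + r - (M + 1)) (a - f) (a - f + 2 + r) < 0 := by
  have key : cliqueAdjPoly (((M + 1) * a + M * r) * (a + r + 1) / a) ((M + 1) * (a + r))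
      ((M + 1) * a + r - (M + 1)) (a - f) (a - f + 2 + r) =
      -((1 - f) * (f * M * (1 + r * (r + 1) / a) + r ^ 2 + r + 2 * M * r + M + 2 * f * r + f
        + f ^ 2 + (1 - f) * (2 * f + 2 * r + M + 1) + (1 - f) ^ 2)) := by
    unfold cliqueAdjPoly
    field_simp
    ring
  rw [key]
  have : 0 < 1 - f := by linarith
  have : 0 < (1 - f) * (f * M * (1 + r * (r + 1) / a) + r ^ 2 + r + 2 * M * r + M + 2 * f * r + f
        + f ^ 2 + (1 - f) * (2 * f + 2 * r + M + 1) + (1 - f) ^ 2) := by positivity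
  linarith

theorem aux_conf (r f t : ℝ) :
    cliqueAdjPoly (4 * (r * (r + 1)) + 1) (2 * (r * (r + 1))) (r * (r + 1) - 1) (r - f)
      (1 + 2 * r + t) = -((4 * f * (1 - f) + 4 * t - 4 * f * t - t ^ 2) * r ^ 2
      + r * (2 * f * (1 - f) + 2 * t + 2 * f * t + 3 * t ^ 2)
      + (t * f * (1 + f) + t ^ 2 * (1 + 2 * f) + t ^ 3)) := by
  unfold cliqueAdjPoly
  ring

theorem aux_conf_floor (r : ℝ) (hr : 0 < r) :
    cliqueAdjPoly (4 * (r * (r + 1)) + 1) (2 * (r * (r + 1))) (r * (r + 1) - 1) (⌊r⌋ : ℤ)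
      (⌊2 + 2 * r⌋ : ℤ) < 0 := by
  obtain ⟨f, hf⟩ : ∃ f, f = r - ⌊r⌋ := ⟨_, rfl⟩
  have hf0 : 0 ≤ f := by have := Int.floor_le r; linarith
  have hf1 : f < 1 := by have := Int.lt_floor_add_one r; linarith
  have hn : ((⌊r⌋ : ℤ) : ℝ) = r - f := by linarith
  rcases lt_or_ge f (1 / 2) with h | h
  · have hy : ⌊2 + 2 * r⌋ = 2 * ⌊r⌋ + 2 := by
      rw [Int.floor_eq_iff]; push_cast; constructor <;> linarith
    have e : ((⌊2 + 2 * r⌋ : ℤ) : ℝ) = 1 + 2 * r + (1 - 2 * f) := by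
      rw [hy]; push_cast; linarith
    rw [e, hn, aux_conf]
    have e2 : 4 * f * (1 - f) + 4 * (1 - 2 * f) - 4 * f * (1 - 2 * f) - (1 - 2 * f) ^ 2
      = 3 - 4 * f := by ring
    rw [e2, neg_lt_zero]
    have : 0 < 3 - 4 * f := by linarith
    have : 0 < 1 - 2 * f := by linarith
    have : 0 < 1 - f := by linarith
    positivity
  · have hy : ⌊2 + 2 * r⌋ = 2 * ⌊r⌋ + 3 := by
      rw [Int.floor_eq_iff]; push_cast; constructor <;> linarith
    have e : ((⌊2 + 2 * r⌋ : ℤ) : ℝ) = 1 + 2 * r + 2 * (1 - f) := by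
      rw [hy]; push_cast; linarith
    rw [e, hn, aux_conf]
    have e2 : 4 * f * (1 - f) + 4 * (2 * (1 - f)) - 4 * f * (2 * (1 - f)) - (2 * (1 - f)) ^ 2
      = 4 * (1 - f) := by ring
    rw [e2, neg_lt_zero]
    have : 0 < 1 - f := by linarith
    positivity

set_option maxHeartbeats 4000000 in
/-- Theorem `thm:CAB-Del` for strongly regular graphs. -/
theorem stmt_5 {V : Type*} [Fintype V] [DecidableEq V] (G : SimpleGraph V) [DecidableRel G.Adj]
    (v k lam μ : ℕ) (hsrg : G.IsSRGWith v k lam μ)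
    (hnoncomplete : G ≠ ⊤) (hedge : G ≠ ⊥)
    (r s : ℝ) (hrs : s ≤ r) (hs : s < 0)
    (hr_root : r ^ 2 - ((lam : ℝ) - μ) * r - ((k : ℝ) - μ) = 0)
    (hs_root : s ^ 2 - ((lam : ℝ) - μ) * s - ((k : ℝ) - μ) = 0) :
    cliqueAdjPoly v k lam (⌊-(μ : ℝ) / s⌋ : ℤ) (⌊2 - (k : ℝ) / s⌋ : ℤ) < 0 := by
  obtain ⟨a, b, hab⟩ := SimpleGraph.ne_bot_iff_exists_adj.1 hedge
  obtain ⟨c, d, hcd, hncd⟩ := SimpleGraph.ne_top_iff_exists_not_adj.1 hnoncomplete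
  have hlk : lam + 1 ≤ k := by
    have := hab.card_commonNeighbors_lt_degree
    rw [hsrg.of_adj a b hab, hsrg.regular.degree_eq a] at this
    exact this
  have hmk : μ ≤ k := by
    have := G.card_commonNeighbors_le_degree_left c d
    rw [hsrg.of_not_adj hcd hncd, hsrg.regular.degree_eq c] at this
    exact this
  have hkv : k + 2 ≤ v := by
    have h1 : insert c (insert d (G.neighborFinset c)) ⊆ Finset.univ := Finset.subset_univ _
    have h2 := Finset.card_le_card h1
    rw [Finset.card_insert_of_notMem (by simp [hcd]), Finset.card_insert_of_notMem (by simpa using hncd),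
      SimpleGraph.card_neighborFinset_eq_degree, hsrg.regular.degree_eq c, Finset.card_univ,
      hsrg.card] at h2
    omega
  have hpar := hsrg.param_eq G (by omega)
  have hparR : (k : ℝ) * (k - lam - 1) = (v - k - 1) * μ := by
    have e1 : ((k - lam - 1 : ℕ) : ℝ) = k - lam - 1 := by
      rw [Nat.sub_sub, Nat.cast_sub hlk]; push_cast; ring
    have e2 : ((v - k - 1 : ℕ) : ℝ) = v - k - 1 := by
      rw [Nat.sub_sub, Nat.cast_sub (by omega)]; push_cast; ring
    rw [← e1, ← e2]; exact_mod_cast hpar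
  have hlkR : (lam : ℝ) + 1 ≤ k := by exact_mod_cast hlk
  have hmkR : (μ : ℝ) ≤ k := by exact_mod_cast hmk
  have hkvR : (k : ℝ) + 2 ≤ v := by exact_mod_cast hkv
  have hlam0 : (0 : ℝ) ≤ lam := Nat.cast_nonneg _
  have hk0 : (0 : ℝ) < k := by linarith
  rcases Nat.eq_zero_or_pos μ with h0 | hpos
  · subst h0
    have hk1 : (k : ℝ) - lam - 1 = 0 := by
      have : (k : ℝ) * (k - lam - 1) = 0 := by rw [hparR]; simp
      rcases mul_eq_zero.1 this with h | h
      · linarith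
      · exact h
    have hs1 : s = -1 := by
      have : (s + 1) * (s - k) = 0 := by
        push_cast at hs_root
        linear_combination hs_root - s * hk1
      rcases mul_eq_zero.1 this with h | h <;> linarith
    have e1 : ⌊-((0 : ℕ) : ℝ) / s⌋ = 0 := by simp
    have e2 : ⌊2 - (k : ℝ) / s⌋ = (k : ℤ) + 2 := by
      rw [Int.floor_eq_iff, hs1]; push_cast; constructor <;> linarith
    rw [e1, e2]
    unfold cliqueAdjPoly
    push_cast
    have : (lam : ℝ) = k - 1 := by linarith
    rw [this]
    nlinarith [sq_nonneg (k : ℝ)]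
  have hposR : (0 : ℝ) < μ := by exact_mod_cast hpos
  -- replace `r` by the second root given by Vieta (it need not be the given one a priori)
  clear hr_root hrs r
  obtain ⟨r, hrdef⟩ : ∃ r : ℝ, r = lam - μ - s := ⟨_, rfl⟩
  have hl : (lam : ℝ) - μ = r + s := by linarith
  have hk : (k : ℝ) - μ = - r * s := by
    rw [hl] at hs_root; linarith
  have hr_root : r ^ 2 - ((lam : ℝ) - μ) * r - ((k : ℝ) - μ) = 0 := by
    rw [hl, hk]; ring
  have hr0 : 0 ≤ r := by
    by_contra hneg
    push Not at hneg
    nlinarith [mul_pos_of_neg_of_neg hneg hs]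
  have hw : r - s ≠ 0 := by
    have : 0 < r - s := by linarith
    exact this.ne'
  have hvm : (v : ℝ) * μ = (k - r) * (k - s) := by
    linear_combination -hparR - k * hl - hk
  obtain ⟨n, hn⟩ := aux_mult G v k lam μ hsrg r s (by omega) hw hl hk hvm
  have hM : 0 < -s - 1 := by
    have h1 : (k : ℝ) - lam - 1 ≠ 0 := by
      intro h
      rw [h, mul_zero] at hparR
      nlinarith
    have h2 : 0 < (k : ℝ) - lam - 1 := lt_of_le_of_ne (by linarith) (Ne.symm h1)
    have h3 : (1 + r) * (-s - 1) = k - lam - 1 := by linear_combination hl - hk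
    by_contra hcon
    push Not at hcon
    nlinarith
  have hs0 : s ≠ 0 := hs.ne
  have hints : (∃ z : ℤ, r = z) → 
      cliqueAdjPoly v k lam (⌊-(μ : ℝ) / s⌋ : ℤ) (⌊2 - (k : ℝ) / s⌋ : ℤ) < 0 := by
    rintro ⟨z, hz⟩
    obtain ⟨x, hx⟩ : ∃ x, x = -(μ : ℝ) / s := ⟨_, rfl⟩
    have hmx : (μ : ℝ) = -s * x := by rw [hx]; field_simp
    have hx0 : 0 < x := by rw [hx]; exact div_pos_of_neg_of_neg (by linarith) hs
    have hy : 2 - (k : ℝ) / s = x + ((2 + z : ℤ) : ℝ) := by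
      push_cast
      rw [← hz]
      have : (k : ℝ) = -s * (x + r) := by linarith
      rw [this]; field_simp; ring
    rw [hy, Int.floor_add_intCast, ← hx]
    have hfl := aux_poly_int (-s - 1) x r (x - ⌊x⌋) hM hx0 hr0
      (by have := Int.floor_le x; linarith) (by have := Int.lt_floor_add_one x; linarith)
    have e1 : (v : ℝ) = ((-s - 1 + 1) * x + (-s - 1) * r) * (x + r + 1) / x := by
      rw [eq_div_iff hx0.ne']
      apply mul_left_cancel₀ (neg_ne_zero.2 hs0)
      have hkk : (k : ℝ) = -s * (x + r) := by linarith
      rw [hkk] at hvm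
      rw [hmx] at hvm
      linear_combination hvm
    have e2 : (k : ℝ) = (-s - 1 + 1) * (x + r) := by linarith
    have e3 : (lam : ℝ) = (-s - 1 + 1) * x + r - (-s - 1 + 1) := by linarith
    rw [← e1, ← e2, ← e3] at hfl
    convert hfl using 1
    congr 1
    · ring
    · push_cast; rw [← hz]; ring
  by_cases hc : 2 * n + 1 = v
  · -- conference graph
    have hcR : 2 * (n : ℝ) + 1 = v := by exact_mod_cast hc
    have h1 : 2 * (k : ℝ) = (v - 1) * (μ - lam) := by
      linear_combination 2 * hn - (r - s) * hcR + (v - 1) * hl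
    have h2 : μ = lam + 1 := by
      have ha : (0 : ℝ) < (μ : ℝ) - lam := by
        by_contra hcon
        push Not at hcon
        nlinarith [mul_nonneg (show (0 : ℝ) ≤ v - 1 by linarith)
          (show (0 : ℝ) ≤ lam - μ by linarith)]
      have hb : (μ : ℝ) - lam < 2 := by
        by_contra hcon
        push Not at hcon
        nlinarith [mul_nonneg (show (0 : ℝ) ≤ v - 1 by linarith)
          (show (0 : ℝ) ≤ (μ : ℝ) - lam - 2 by linarith)]
      have ha' : lam < μ := by
        have : (lam : ℝ) < μ := by linarith
        exact_mod_cast this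
      have hb' : μ < lam + 2 := by
        have : (μ : ℝ) < lam + 2 := by linarith
        exact_mod_cast this
      omega
    have h2R : (μ : ℝ) = lam + 1 := by exact_mod_cast h2
    have hsr : s = -(r + 1) := by linarith
    have hv2 : (v : ℝ) = 2 * k + 1 := by rw [h2R] at h1; linarith
    have hk2 : (k : ℝ) = 2 * μ := by
      apply mul_left_cancel₀ hk0.ne'
      rw [hv2] at hparR
      linear_combination hparR - k * h2R
    have hmr : (μ : ℝ) = r * (r + 1) := by rw [hsr] at hk; linarith
    have hrpos : 0 < r := by
      rcases hr0.lt_or_eq with h | h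
      · exact h
      · rw [← h] at hmr; linarith
    have hr1 : r + 1 ≠ 0 := by positivity
    have ex : -(μ : ℝ) / s = r := by rw [hsr, hmr]; field_simp
    have ey : 2 - (k : ℝ) / s = 2 + 2 * r := by rw [hk2, hsr, hmr]; field_simp; ring
    rw [ex, ey]
    have := aux_conf_floor r hrpos
    convert this using 2 <;> linarith
  · apply hints
    have hcR : 2 * (n : ℝ) + 1 - v ≠ 0 := by
      intro h
      apply hc
      have : 2 * (n : ℝ) + 1 = v := by linarith
      exact_mod_cast this
    have hq : r = (((((lam : ℚ) - μ) + (-((lam : ℚ) - μ) * (v - 1) - 2 * k) / (2 * n + 1 - v)) / 2 : ℚ) : ℝ) := by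
      push_cast
      have : (-((lam : ℝ) - μ) * (v - 1) - 2 * k) / (2 * n + 1 - v) = r - s := by
        rw [div_eq_iff hcR]
        linear_combination -2 * hn - (v - 1) * hl
      rw [this]; linarith
    obtain ⟨q, hq'⟩ : ∃ q : ℚ, r = q := ⟨_, hq⟩
    obtain ⟨z, hz⟩ := aux_int q ((lam : ℤ) - μ) ((k : ℤ) - μ) (by
      rw [hq'] at hr_root
      push_cast
      exact_mod_cast hr_root)
    exact ⟨z, by rw [hq', hz]; simp⟩
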